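/- Let θ^1, θ^2 be real numbers that are linearly independent over ℤ together with 1 (no nonzero integer triple (a,b,c) satisfies aθ^1 + bθ^2 + c = 0). Then with φ = (1+√5)/2 there exists a sequence of integer pairs (x_1(i), x_2(i)) with x_1(i) > 0 and x_2(i) > 0 such that ‖θ^1 x_1(i) + θ^2 x_2(i)‖ · (max(x_1(i), x_2(i)))^φ → 0 as i → ∞. -/

import Mathlib

open Filter

/-- Distance from a real number to the nearest integer. -/
noncomputable def nint (x : ℝ) : ℝ := |x - round x|

/-- The linear form `s * x₁ + t * x₂ + x₃` on integer triples. -/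
noncomputable def linForm (s t : ℝ) (x : ℤ × ℤ × ℤ) : ℝ := s * x.1 + t * x.2.1 + x.2.2

/-- The height of an integer triple is the sup norm of its first two coordinates. -/
def height (x : ℤ × ℤ × ℤ) : ℤ := max |x.1| |x.2.1|

/-- The minor of two integer triples on the first two coordinates. -/
def minor (u v : ℤ × ℤ × ℤ) : ℤ := u.1 * v.2.1 - u.2.1 * v.1

/-- The determinant of three integer triples. -/
def tripleDet (u v w : ℤ × ℤ × ℤ) : ℤ :=
  (u.2.1 * v.2.2 - u.2.2 * v.2.1) * w.1 + (u.2.2 * v.1 - u.1 * v.2.2) * w.2.1 +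
    (u.1 * v.2.1 - u.2.1 * v.1) * w.2.2

/-- Interchange of the first two coordinates. -/
def swapFst (x : ℤ × ℤ × ℤ) : ℤ × ℤ × ℤ := (x.2.1, x.1, x.2.2)

/-- `u` and `v` are consecutive best approximations for the linear form with coefficients
`s, t, 1`. -/
structure Consecutive (s t : ℝ) (u v : ℤ × ℤ × ℤ) : Prop where
  height_lt : height u < height v
  lt : |linForm s t v| < |linForm s t u|
  pos : 0 < |linForm s t v|
  le_of_lt : ∀ z, z ≠ 0 → height z < height v → |linForm s t u| ≤ |linForm s t z|
  le_of_le : ∀ z, z ≠ 0 → height z ≤ height v → |linForm s t v| ≤ |linForm s t z|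

lemma height_nonneg (x : ℤ × ℤ × ℤ) : 0 ≤ height x := le_max_of_le_left (abs_nonneg _)

lemma linForm_swapFst (s t : ℝ) (x : ℤ × ℤ × ℤ) : linForm t s (swapFst x) = linForm s t x := by
  simp only [linForm, swapFst]; ring

lemma height_swapFst (x : ℤ × ℤ × ℤ) : height (swapFst x) = height x := max_comm _ _

lemma minor_swapFst (u v : ℤ × ℤ × ℤ) : minor (swapFst u) (swapFst v) = -minor u v := by
  simp only [minor, swapFst]; ring

lemma swapFst_ne_zero {x : ℤ × ℤ × ℤ} (h : x ≠ 0) : swapFst x ≠ 0 := by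
  contrapose! h
  simp only [swapFst, Prod.ext_iff, Prod.fst_zero, Prod.snd_zero] at h ⊢
  tauto

lemma Consecutive.swapFst {s t : ℝ} {u v : ℤ × ℤ × ℤ} (h : Consecutive s t u v) :
    Consecutive t s (swapFst u) (swapFst v) where
  height_lt := by simpa only [height_swapFst] using h.height_lt
  lt := by simpa only [linForm_swapFst] using h.lt
  pos := by simpa only [linForm_swapFst] using h.pos
  le_of_lt z hz hlt := by
    have := h.le_of_lt _ (swapFst_ne_zero hz) (by simpa only [height_swapFst] using hlt)
    simpa only [linForm_swapFst] using this
  le_of_le z hz hlt := by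
    have := h.le_of_le _ (swapFst_ne_zero hz) (by simpa only [height_swapFst] using hlt)
    simpa only [linForm_swapFst] using this

lemma exists_small_linForm (s t : ℝ) {N : ℕ} (hN : 0 < N) :
    ∃ z : ℤ × ℤ × ℤ, z ≠ 0 ∧ height z ≤ N ∧ |linForm s t z| * (N : ℝ) ^ 2 ≤ 1 := by
  have hN' : (0 : ℝ) < (N : ℝ) ^ 2 := by positivity
  let f : ℕ × ℕ → ℕ := fun p => ⌊Int.fract (s * p.1 + t * p.2) * (N : ℝ) ^ 2⌋₊
  have hmaps : ∀ p ∈ Finset.range (N + 1) ×ˢ Finset.range (N + 1), f p ∈ Finset.range (N ^ 2) := by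
    intro p _
    rw [Finset.mem_range]
    refine (Nat.floor_lt (mul_nonneg (Int.fract_nonneg _) hN'.le)).2 ?_
    push_cast
    have := Int.fract_lt_one (s * p.1 + t * p.2)
    nlinarith
  have hcard : (Finset.range (N ^ 2)).card <
      (Finset.range (N + 1) ×ˢ Finset.range (N + 1)).card := by
    simp only [Finset.card_product, Finset.card_range]
    nlinarith
  obtain ⟨p, hp, q, hq, hpq, hfpq⟩ := Finset.exists_ne_map_eq_of_card_lt_of_maps_to hcard hmaps
  simp only [Finset.mem_product, Finset.mem_range] at hp hq
  refine ⟨((p.1 : ℤ) - q.1, (p.2 : ℤ) - q.2,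
    ⌊s * q.1 + t * q.2⌋ - ⌊s * p.1 + t * p.2⌋), ?_, ?_, ?_⟩
  · intro h
    simp only [Prod.ext_iff, Prod.fst_zero, Prod.snd_zero] at h
    exact hpq (Prod.ext (by lia) (by lia))
  · simp only [height]
    refine max_le (abs_le.2 ⟨?_, ?_⟩) (abs_le.2 ⟨?_, ?_⟩) <;> lia
  · have e : linForm s t ((p.1 : ℤ) - q.1, (p.2 : ℤ) - q.2,
        ⌊s * q.1 + t * q.2⌋ - ⌊s * p.1 + t * p.2⌋) =
        Int.fract (s * p.1 + t * p.2) - Int.fract (s * q.1 + t * q.2) := by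
      simp only [linForm, Int.fract]; push_cast; ring
    rw [e, ← abs_of_pos hN', ← abs_mul, sub_mul]
    have h1 := Nat.floor_le (mul_nonneg (Int.fract_nonneg (s * p.1 + t * p.2)) hN'.le)
    have h2 := Nat.floor_le (mul_nonneg (Int.fract_nonneg (s * q.1 + t * q.2)) hN'.le)
    have h3 := Nat.lt_floor_add_one (Int.fract (s * p.1 + t * p.2) * (N : ℝ) ^ 2)
    have h4 := Nat.lt_floor_add_one (Int.fract (s * q.1 + t * q.2) * (N : ℝ) ^ 2)
    have h5 : (⌊Int.fract (s * p.1 + t * p.2) * (N : ℝ) ^ 2⌋₊ : ℝ) =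
        ⌊Int.fract (s * q.1 + t * q.2) * (N : ℝ) ^ 2⌋₊ := congrArg Nat.cast hfpq
    rw [abs_le]
    constructor <;> linarith

lemma Consecutive.mul_height_sq_le {s t : ℝ} {u v : ℤ × ℤ × ℤ} (h : Consecutive s t u v) :
    |linForm s t u| * (height v : ℝ) ^ 2 ≤ 4 := by
  obtain ⟨N, hN⟩ := Int.eq_ofNat_of_zero_le
    (show 0 ≤ height v - 1 by have := h.height_lt; have := height_nonneg u; lia)
  have hv : (height v : ℝ) = N + 1 := by
    have : height v = N + 1 := by lia
    rw [this]; push_cast; ring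
  rcases Nat.eq_zero_or_pos N with h0 | h0
  · have := h.le_of_lt (0, 0, 1) (by simp)
      (lt_of_le_of_lt (by simp [height]) ((height_nonneg u).trans_lt h.height_lt))
    simp only [linForm] at this ⊢
    subst h0
    norm_num at this
    rw [hv]; norm_num; linarith
  · obtain ⟨z, hz, hzN, hzL⟩ := exists_small_linForm s t h0
    have := h.le_of_lt z hz (by lia)
    have h1 : (1 : ℝ) ≤ N := by exact_mod_cast h0
    rw [hv]
    calc |linForm s t u| * ((N : ℝ) + 1) ^ 2 ≤ |linForm s t z| * (2 * N) ^ 2 := by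
          gcongr; linarith
      _ = 4 * (|linForm s t z| * (N : ℝ) ^ 2) := by ring
      _ ≤ 4 := by linarith

lemma finite_height_le_linForm_le (s t : ℝ) (N : ℤ) (C : ℝ) :
    {z : ℤ × ℤ × ℤ | height z ≤ N ∧ |linForm s t z| ≤ C}.Finite := by
  obtain ⟨B, hB⟩ := exists_nat_ge (C + |s| * N + |t| * N)
  refine ((Set.finite_Icc (-N) N).prod ((Set.finite_Icc (-N) N).prod
    (Set.finite_Icc (-(B : ℤ)) B))).subset ?_
  rintro ⟨a, b, c⟩ ⟨h1, h2⟩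
  simp only [height, max_le_iff] at h1
  refine ⟨abs_le.1 h1.1, abs_le.1 h1.2, abs_le.1 ?_⟩
  have ha : |(a : ℝ)| ≤ N := by exact_mod_cast h1.1
  have hb : |(b : ℝ)| ≤ N := by exact_mod_cast h1.2
  simp only [linForm] at h2
  have : |(c : ℝ)| ≤ B := by
    have e : (c : ℝ) = (s * a + t * b + c) - s * a - t * b := by ring
    have h3 := abs_sub (s * a + t * b + c - s * a) (t * b)
    have h4 := abs_sub (s * a + t * b + c) (s * a)
    rw [← e] at h3
    rw [abs_mul] at h3 h4
    have := mul_le_mul_of_nonneg_left ha (abs_nonneg s)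
    have := mul_le_mul_of_nonneg_left hb (abs_nonneg t)
    linarith
  exact_mod_cast this

lemma exists_consecutive {s t : ℝ} (hst : ∀ z, z ≠ 0 → linForm s t z ≠ 0) {u : ℤ × ℤ × ℤ}
    (hu : u ≠ 0) (hbest : ∀ z, z ≠ 0 → height z ≤ height u → |linForm s t u| ≤ |linForm s t z|) :
    ∃ v, v ≠ 0 ∧ Consecutive s t u v := by
  classical
  have hpos : 0 < |linForm s t u| := abs_pos.2 (hst u hu)
  have hex : ∃ N : ℕ, ∃ z, z ≠ 0 ∧ height z = N ∧ |linForm s t z| < |linForm s t u| := by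
    obtain ⟨N, hN⟩ := exists_nat_gt (1 / |linForm s t u|)
    have hN0 : (0 : ℝ) < N := lt_trans (by positivity) hN
    obtain ⟨z, hz, -, hzL⟩ := exists_small_linForm s t (Nat.cast_pos.1 hN0)
    refine ⟨(height z).toNat, z, hz, by have := height_nonneg z; lia, ?_⟩
    have h1 : (1 : ℝ) ≤ N := by exact_mod_cast Nat.cast_pos.1 hN0
    rw [div_lt_iff₀ hpos] at hN
    by_contra! hle
    have : (N : ℝ) * |linForm s t u| ≤ |linForm s t z| * (N : ℝ) ^ 2 := by
      nlinarith [mul_le_mul_of_nonneg_left hle hN0.le,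
        mul_le_mul_of_nonneg_left h1 (mul_nonneg hN0.le (abs_nonneg (linForm s t z)))]
    linarith
  obtain ⟨z₀, hz₀, hz₀N, hz₀L⟩ := Nat.find_spec hex
  set N := Nat.find hex
  let S : Set (ℤ × ℤ × ℤ) := {z | z ≠ 0 ∧ height z ≤ N ∧ |linForm s t z| ≤ |linForm s t u|}
  have hS : S.Finite := (finite_height_le_linForm_le s t N _).subset fun z hz => hz.2
  obtain ⟨v, ⟨hv0, hvN, -⟩, hmin⟩ := Set.exists_min_image S (fun z => |linForm s t z|) hS
    ⟨z₀, hz₀, hz₀N.le, hz₀L.le⟩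
  have hlt : |linForm s t v| < |linForm s t u| :=
    (hmin z₀ ⟨hz₀, hz₀N.le, hz₀L.le⟩).trans_lt hz₀L
  have hsmall : ∀ z, z ≠ 0 → height z < N → |linForm s t u| ≤ |linForm s t z| := by
    intro z hz hzN
    by_contra! hlt'
    have := height_nonneg z
    exact Nat.find_min hex (m := (height z).toNat) (by lia) ⟨z, hz, by lia, hlt'⟩
  have hvN' : height v = N := le_antisymm hvN (not_lt.1 fun h => (hsmall v hv0 h).not_gt hlt)
  refine ⟨v, hv0, ⟨?_, hlt, abs_pos.2 (hst v hv0), fun z hz h => hsmall z hz (hvN' ▸ h), ?_⟩⟩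
  · by_contra! h
    exact (hbest v hv0 h).not_gt hlt
  · intro z hz h
    by_cases hzu : |linForm s t z| ≤ |linForm s t u|
    · exact hmin z ⟨hz, hvN' ▸ h, hzu⟩
    · linarith

lemma exists_seq_consecutive {s t : ℝ} (hst : ∀ z, z ≠ 0 → linForm s t z ≠ 0) :
    ∃ x : ℕ → ℤ × ℤ × ℤ, ∀ k, Consecutive s t (x k) (x (k + 1)) := by
  let B := {u : ℤ × ℤ × ℤ //
    u ≠ 0 ∧ ∀ z, z ≠ 0 → height z ≤ height u → |linForm s t u| ≤ |linForm s t z|}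
  have hnext : ∀ u : B, ∃ v : B, Consecutive s t u v := by
    rintro ⟨u, hu, hbest⟩
    obtain ⟨v, hv, huv⟩ := exists_consecutive hst hu hbest
    exact ⟨⟨v, hv, huv.le_of_le⟩, huv⟩
  choose f hf using hnext
  have h0 : ∀ z : ℤ × ℤ × ℤ, z ≠ 0 → height z ≤ height (0, 0, 1) →
      |linForm s t (0, 0, 1)| ≤ |linForm s t z| := by
    rintro ⟨a, b, c⟩ hz h
    simp only [height, abs_zero, max_self, max_le_iff, abs_nonpos_iff] at h
    obtain ⟨rfl, rfl⟩ := h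
    have hc : c ≠ 0 := by rintro rfl; exact hz rfl
    have : (1 : ℝ) ≤ |(c : ℝ)| := by exact_mod_cast Int.one_le_abs hc
    simpa [linForm] using this
  refine ⟨fun k => (f^[k] ⟨(0, 0, 1), by simp, h0⟩ : B), fun k => ?_⟩
  simp only [Function.iterate_succ_apply']
  exact hf _

lemma linForm_smul_add_smul (s t : ℝ) (a b : ℤ) (u v : ℤ × ℤ × ℤ) :
    linForm s t (a • u + b • v) = a * linForm s t u + b * linForm s t v := by
  simp only [linForm, Prod.fst_add, Prod.snd_add, Prod.smul_fst, Prod.smul_snd, smul_eq_mul]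
  push_cast; ring

lemma height_smul (a : ℤ) (u : ℤ × ℤ × ℤ) : height (a • u) = |a| * height u := by
  simp only [height, Prod.smul_fst, Prod.smul_snd, smul_eq_mul, abs_mul]
  exact (mul_max_of_nonneg _ _ (abs_nonneg a)).symm

lemma height_add_le (u v : ℤ × ℤ × ℤ) : height (u + v) ≤ height u + height v :=
  max_le ((abs_add_le _ _).trans (add_le_add (le_max_left _ _) (le_max_left _ _)))
    ((abs_add_le _ _).trans (add_le_add (le_max_right _ _) (le_max_right _ _)))

/-- No nontrivial combination of two consecutive best approximations with coefficients at most
`m / 2` in absolute value is divisible by `m`. -/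
lemma Consecutive.eq_zero_of_smul_eq {s t : ℝ} {u v z : ℤ × ℤ × ℤ} (h : Consecutive s t u v)
    {m a b : ℤ} (hm : 0 < m) (ha : 2 * |a| ≤ m) (hb : 2 * |b| ≤ m)
    (hz : m • z = a • u + b • v) : z = 0 := by
  by_contra hz0
  have hu := height_nonneg u
  have huv := h.height_lt
  have h1 : m * height z ≤ |a| * height u + |b| * height v := by
    rw [← height_smul a, ← height_smul b, ← abs_of_pos hm, ← height_smul m, hz]
    exact height_add_le _ _
  have h2 : height z < height v := by nlinarith
  have h3 := h.le_of_lt z hz0 h2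
  have h4 : (m : ℝ) * linForm s t z = a * linForm s t u + b * linForm s t v := by
    rw [← linForm_smul_add_smul, ← hz]
    simpa using (linForm_smul_add_smul s t m 0 z 0).symm
  have h5 := abs_add_le (a * linForm s t u) (b * linForm s t v)
  rw [← h4, abs_mul, abs_mul, abs_mul] at h5
  have hm' : (0 : ℝ) < m := by exact_mod_cast hm
  have ha' : 2 * |(a : ℝ)| ≤ m := by exact_mod_cast ha
  have hb' : 2 * |(b : ℝ)| ≤ m := by exact_mod_cast hb
  rw [abs_of_pos hm'] at h5
  have h6 := h.lt
  have h7 := h.pos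
  nlinarith

lemma exists_two_mul_abs_le_dvd_sub {m : ℤ} (hm : 0 < m) (a : ℤ) :
    ∃ b, 2 * |b| ≤ m ∧ m ∣ a - b := by
  refine ⟨a.bmod m.toNat, ?_, ?_⟩
  · have h1 := Int.bmod_le (x := a) (m := m.toNat) (by lia)
    have h2 := Int.le_bmod (x := a) (m := m.toNat) (by lia)
    rcases abs_cases (a.bmod m.toNat) with h | h <;> lia
  · have := Int.bmod_add_bdiv a m.toNat
    exact ⟨a.bdiv m.toNat, by rw [Int.toNat_of_nonneg hm.le] at this; linarith⟩

/-- If a combination of two consecutive best approximations is divisible by `m`, then so is its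
second coefficient. -/
lemma Consecutive.dvd_of_dvd_combination {s t : ℝ} {u v : ℤ × ℤ × ℤ} (h : Consecutive s t u v)
    {m a b : ℤ} (hm : 0 < m) (h1 : m ∣ a * u.1 + b * v.1) (h2 : m ∣ a * u.2.1 + b * v.2.1)
    (h3 : m ∣ a * u.2.2 + b * v.2.2) : m ∣ b := by
  obtain ⟨a', ha', ha⟩ := exists_two_mul_abs_le_dvd_sub hm a
  obtain ⟨b', hb', hb⟩ := exists_two_mul_abs_le_dvd_sub hm b
  have key : ∀ p q : ℤ, m ∣ a * p + b * q → m ∣ a' * p + b' * q := by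
    intro p q hpq
    have e : a' * p + b' * q = (a * p + b * q) - ((a - a') * p + (b - b') * q) := by ring
    rw [e]
    exact dvd_sub hpq (dvd_add (ha.mul_right p) (hb.mul_right q))
  obtain ⟨z1, hz1⟩ := key _ _ h1
  obtain ⟨z2, hz2⟩ := key _ _ h2
  obtain ⟨z3, hz3⟩ := key _ _ h3
  have hz : m • (z1, z2, z3) = a' • u + b' • v := by
    ext <;> simp [hz1, hz2, hz3]
  have h0 := h.eq_zero_of_smul_eq hm ha' hb' hz
  rw [h0, smul_zero] at hz
  have hb0 : b' = 0 := by
    have e : a' • u = (-b') • v := by rw [neg_smul]; exact eq_neg_of_add_eq_zero_left hz.symm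
    have e1 : |a'| * height u = |b'| * height v := by
      rw [← height_smul, e, height_smul, abs_neg]
    have e2 : |a'| * |linForm s t u| = |b'| * |linForm s t v| := by
      have := linForm_smul_add_smul s t a' b' u v
      rw [← hz] at this
      have h0 : linForm s t 0 = 0 := by simp [linForm]
      rw [h0] at this
      push_cast
      rw [← abs_mul, ← abs_mul, ← abs_neg (b' * linForm s t v)]
      congr 1; linarith
    by_contra hb0
    have p1 : 0 < |b'| := abs_pos.2 hb0
    have p2 := h.height_lt
    have p3 := height_nonneg u
    have p4 : |b'| < |a'| := by
      by_contra! hle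
      nlinarith
    have p5 : (|b'| : ℝ) < |a'| := by exact_mod_cast p4
    have p6 : (0 : ℝ) < |b'| := by exact_mod_cast p1
    have := h.pos
    have := h.lt
    push_cast at e2 p5 p6
    nlinarith
  simpa [hb0] using hb

lemma Consecutive.exists_tripleDet_eq_one {s t : ℝ} {u v : ℤ × ℤ × ℤ}
    (h : Consecutive s t u v) : ∃ w, tripleDet u v w = 1 := by
  set n1 := u.2.1 * v.2.2 - u.2.2 * v.2.1 with hn1
  set n2 := u.2.2 * v.1 - u.1 * v.2.2 with hn2
  set n3 := u.1 * v.2.1 - u.2.1 * v.1 with hn3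
  have hg : Int.gcd (Int.gcd n1 n2) n3 = 1 := by
    by_contra hne
    obtain ⟨p, hp, hpg⟩ := Nat.exists_prime_and_dvd hne
    have hp0 : (0 : ℤ) < p := by exact_mod_cast hp.pos
    have hpg' : (p : ℤ) ∣ Int.gcd (Int.gcd n1 n2) n3 := by exact_mod_cast hpg
    have d3 : (p : ℤ) ∣ n3 := hpg'.trans (Int.gcd_dvd_right _ _)
    have d12 : (p : ℤ) ∣ Int.gcd n1 n2 := hpg'.trans (Int.gcd_dvd_left _ _)
    have d1 : (p : ℤ) ∣ n1 := d12.trans (Int.gcd_dvd_left _ _)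
    have d2 : (p : ℤ) ∣ n2 := d12.trans (Int.gcd_dvd_right _ _)
    have e1 : (p : ℤ) ∣ u.1 := h.dvd_of_dvd_combination (a := -v.1) hp0
      (by ring_nf; simp) (d3.trans (dvd_of_eq (by rw [hn3]; ring)))
      ((dvd_neg.2 d2).trans (dvd_of_eq (by rw [hn2]; ring)))
    have e2 : (p : ℤ) ∣ u.2.1 := h.dvd_of_dvd_combination (a := -v.2.1) hp0
      ((dvd_neg.2 d3).trans (dvd_of_eq (by rw [hn3]; ring))) (by ring_nf; simp)
      (d1.trans (dvd_of_eq (by rw [hn1]; ring)))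
    have e3 : (p : ℤ) ∣ u.2.2 := h.dvd_of_dvd_combination (a := -v.2.2) hp0
      (d2.trans (dvd_of_eq (by rw [hn2]; ring)))
      ((dvd_neg.2 d1).trans (dvd_of_eq (by rw [hn1]; ring)))
      (by ring_nf; simp)
    obtain ⟨z1, hz1⟩ := e1
    obtain ⟨z2, hz2⟩ := e2
    obtain ⟨z3, hz3⟩ := e3
    have hz := h.eq_zero_of_smul_eq (z := (z1, z2, z3)) (a := 1) (b := 0) hp0
      (by have := hp.two_le; simp; lia) (by simp) (by ext <;> simp [hz1, hz2, hz3])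
    simp only [Prod.ext_iff, Prod.fst_zero, Prod.snd_zero] at hz
    have hp1 := h.pos.trans h.lt
    rw [abs_pos] at hp1
    exact hp1 (by simp [linForm, hz1, hz2, hz3, hz])
  have b1 := Int.gcd_eq_gcd_ab n1 n2
  have b2 := Int.gcd_eq_gcd_ab (Int.gcd n1 n2) n3
  rw [hg] at b2
  refine ⟨(Int.gcdA n1 n2 * Int.gcdA (Int.gcd n1 n2) n3,
    Int.gcdB n1 n2 * Int.gcdA (Int.gcd n1 n2) n3, Int.gcdB (Int.gcd n1 n2) n3), ?_⟩
  simp only [tripleDet]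
  rw [← hn1, ← hn2, ← hn3]
  push_cast at b2
  linear_combination -b2 - Int.gcdA (Int.gcd n1 n2) n3 * b1

/-- A lattice line parallel to a vector of the second quadrant that is far enough from the origin
contains a point of the open first quadrant. -/
lemma exists_pos_add_smul {p q : ℤ} {u w : ℤ × ℤ × ℤ} (hu1 : u.1 = -p) (hu2 : u.2.1 = q)
    (hp : 0 ≤ p) (hpq : p ≤ q) (hq : 0 < q) (hw : q ^ 2 < q * w.1 + p * w.2.1) :
    ∃ c : ℤ, 0 < (w + c • u).1 ∧ 0 < (w + c • u).2.1 ∧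
      (w + c • u).1 * q ≤ q * w.1 + p * w.2.1 ∧ (w + c • u).2.1 ≤ q := by
  refine ⟨-((w.2.1 - 1) / q), ?_⟩
  have h1 := Int.emod_add_mul_ediv (w.2.1 - 1) q
  have h2 := Int.emod_nonneg (w.2.1 - 1) hq.ne'
  have h3 := Int.emod_lt_of_pos (w.2.1 - 1) hq
  set e := (w.2.1 - 1) / q
  set r := (w.2.1 - 1) % q
  simp only [Prod.fst_add, Prod.snd_add, Prod.smul_fst, Prod.smul_snd, smul_eq_mul, hu1, hu2]
  have h4 : w.2.1 + -e * q = r + 1 := by linarith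
  have h5 : q * (w.1 + -e * -p) = (q * w.1 + p * w.2.1) - p * (r + 1) := by
    rw [← h4]; ring
  have h6 : 0 < q * (w.1 + -e * -p) := by rw [h5]; nlinarith
  refine ⟨pos_of_mul_pos_right h6 hq.le, by lia, ?_, by lia⟩
  nlinarith

lemma exists_pos_combination_of_abs_le (s t : ℝ) {u v : ℤ × ℤ × ℤ} (hu : u.1 * u.2.1 ≤ 0)
    (hle : |u.1| ≤ |u.2.1|) (h0 : 0 < height u) {j : ℤ} (hj : 0 < j)
    (hjD : height u ^ 2 < j * |minor u v|) :
    ∃ y : ℤ × ℤ × ℤ, 0 < y.1 ∧ 0 < y.2.1 ∧ height y * height u ≤ j * |minor u v| ∧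
      |linForm s t y| * height u ≤
        j * |linForm s t v * u.2.1 - linForm s t u * v.2.1| + |linForm s t u| * height u := by
  have hhu : height u = |u.2.1| := max_eq_right hle
  rw [hhu] at h0 hjD ⊢
  obtain ⟨σ, hσ, hσu⟩ : ∃ σ : ℤ, |σ| = 1 ∧ σ * u.2.1 = |u.2.1| := by
    rcases abs_cases u.2.1 with h | h
    · exact ⟨1, rfl, by rw [h.1]; ring⟩
    · exact ⟨-1, rfl, by rw [h.1]; ring⟩
  obtain ⟨τ, hτ, hτD⟩ : ∃ τ : ℤ, |τ| = 1 ∧ τ * (σ * -minor u v) = |minor u v| := by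
    have e : |minor u v| = |σ * -minor u v| := by rw [abs_mul, hσ, abs_neg, one_mul]
    rw [e]
    rcases abs_cases (σ * -minor u v) with h | h
    · exact ⟨1, rfl, by rw [h.1]; ring⟩
    · exact ⟨-1, rfl, by rw [h.1]; ring⟩
  have hσ2 : σ * σ = 1 := by rw [← abs_mul_abs_self, hσ]; rfl
  set q := |u.2.1| with hq
  have hσu1 : |σ * u.1| = |u.1| := by rw [abs_mul, hσ, one_mul]
  have hneg : σ * u.1 ≤ 0 := by
    have : (σ * u.1) * q = u.1 * u.2.1 := by rw [← hσu]; linear_combination u.1 * u.2.1 * hσ2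
    nlinarith
  have key : q * ((τ * j) • v).1 + -(σ * u.1) * ((τ * j) • v).2.1 = j * |minor u v| := by
    rw [← hτD, ← hσu]
    simp only [Prod.smul_fst, Prod.smul_snd, smul_eq_mul, minor]
    ring
  obtain ⟨c, hc1, hc2, hc3, hc4⟩ := exists_pos_add_smul (p := -(σ * u.1)) (q := q)
    (u := σ • u) (w := (τ * j) • v) (by simp) (by simpa using hσu) (by linarith)
    ((neg_le_abs _).trans (hσu1.trans_le hle)) h0 (by rw [key]; exact hjD)
  rw [key] at hc3
  set y := (τ * j) • v + c • σ • u with hy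
  refine ⟨y, hc1, hc2, ?_, ?_⟩
  · rw [height, abs_of_pos hc1, abs_of_pos hc2, max_mul_of_nonneg _ _ h0.le]
    refine max_le hc3 ?_
    nlinarith
  · have hyL : linForm s t y = (τ * j : ℤ) * linForm s t v + (c * σ : ℤ) * linForm s t u := by
      rw [← linForm_smul_add_smul, hy, mul_smul c]
    have hy2 : (y.2.1 : ℝ) = (τ * j : ℤ) * v.2.1 + (c * σ : ℤ) * u.2.1 := by
      rw [hy]
      simp only [Prod.snd_add, Prod.fst_add, Prod.smul_fst, Prod.smul_snd, smul_eq_mul]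
      push_cast; ring
    have e : linForm s t y * u.2.1 =
        (τ * j : ℤ) * (linForm s t v * u.2.1 - linForm s t u * v.2.1) +
          linForm s t u * y.2.1 := by
      rw [hyL, hy2]; ring
    have hqR : (q : ℝ) = |(u.2.1 : ℝ)| := by rw [hq]; push_cast; rfl
    have hy2' : |(y.2.1 : ℝ)| ≤ q := by
      rw [abs_of_pos (by exact_mod_cast hc2)]; exact_mod_cast hc4
    have hτj : |((τ * j : ℤ) : ℝ)| = j := by
      rw [← Int.cast_abs, abs_mul, hτ, one_mul, abs_of_pos hj]
    calc |linForm s t y| * (q : ℝ) = |linForm s t y * u.2.1| := by rw [abs_mul, hqR]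
      _ ≤ |((τ * j : ℤ) : ℝ) * (linForm s t v * u.2.1 - linForm s t u * v.2.1)| +
          |linForm s t u * y.2.1| := by rw [e]; exact abs_add_le _ _
      _ ≤ _ := by
        rw [abs_mul, abs_mul, hτj]
        gcongr

/-- The minor of `u, v` formed from the linear form and the second coordinate is not small. -/
lemma Consecutive.le_two_mul_abs_minor {s t : ℝ} {u v : ℤ × ℤ × ℤ} (h : Consecutive s t u v)
    (hu : u.1 * u.2.1 ≤ 0) (hv : v.1 * v.2.1 ≤ 0) (hle : |v.1| ≤ |v.2.1|) :
    |linForm s t u| * height v ≤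
      2 * |linForm s t u * v.2.1 - linForm s t v * u.2.1| := by
  have hhv : height v = |v.2.1| := max_eq_right hle
  have hlt := h.height_lt
  have hu2 : |u.2.1| < |v.2.1| := (le_max_right _ _).trans_lt (hhv ▸ hlt)
  have hu1 : |u.1| < |v.2.1| := (le_max_left _ _).trans_lt (hhv ▸ hlt)
  have hL := h.lt
  have hLpos := h.pos
  obtain ⟨σ, hσ, hσL⟩ : ∃ σ : ℤ, |σ| = 1 ∧ 0 ≤ linForm s t u * (σ * linForm s t v) := by
    rcases le_total 0 (linForm s t u * linForm s t v) with h | h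
    · exact ⟨1, rfl, by push_cast; linarith⟩
    · exact ⟨-1, rfl, by push_cast; linarith⟩
  have hσ2 : σ * σ = 1 := by rw [← abs_mul_abs_self, hσ]; rfl
  have hσR : |(σ : ℝ)| = 1 := by exact_mod_cast hσ
  have hσ2R : (σ : ℝ) * σ = 1 := by exact_mod_cast hσ2
  have hu2R : |(u.2.1 : ℝ)| < |(v.2.1 : ℝ)| := by exact_mod_cast hu2
  have hvR : (height v : ℝ) = |(v.2.1 : ℝ)| := by rw [hhv]; push_cast; rfl
  rw [hvR]
  rcases le_or_gt (u.2.1 * (σ * v.2.1)) 0 with hs | hs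
  · have hsR : (u.2.1 : ℝ) * (σ * v.2.1) ≤ 0 := by exact_mod_cast hs
    have e : |linForm s t u * v.2.1| ≤ |linForm s t u * v.2.1 - linForm s t v * u.2.1| := by
      rw [← sq_le_sq]
      have : 0 ≤ -((linForm s t u * v.2.1) * (linForm s t v * u.2.1)) := by
        have e1 : -((linForm s t u * v.2.1) * (linForm s t v * u.2.1)) =
            (linForm s t u * (σ * linForm s t v)) * -(u.2.1 * (σ * v.2.1)) := by
          linear_combination (linForm s t u * v.2.1 * (linForm s t v * u.2.1)) * hσ2R
        rw [e1]
        exact mul_nonneg hσL (by linarith)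
      nlinarith [sq_nonneg (linForm s t v * u.2.1)]
    rw [abs_mul] at e
    have := abs_nonneg (linForm s t u * v.2.1 - linForm s t v * u.2.1)
    linarith
  · have hs1 : 0 ≤ u.1 * (σ * v.1) := by
      have : 0 ≤ (u.1 * (σ * v.1)) * (u.2.1 * (σ * v.2.1)) := by
        have e : (u.1 * (σ * v.1)) * (u.2.1 * (σ * v.2.1)) =
            (u.1 * u.2.1) * (v.1 * v.2.1) := by
          linear_combination u.1 * v.1 * u.2.1 * v.2.1 * hσ2
        rw [e]
        exact mul_nonneg_of_nonpos_of_nonpos hu hv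
      exact nonneg_of_mul_nonneg_left this hs
    have hσv1 : |σ * v.1| = |v.1| := by rw [abs_mul, hσ, one_mul]
    have hσv2 : |σ * v.2.1| = |v.2.1| := by rw [abs_mul, hσ, one_mul]
    have habs : ∀ a b c : ℤ, 0 ≤ a * b → |a| ≤ c → |b| ≤ c → |a - b| ≤ c := by
      intro a b c hab ha hb
      rw [abs_le] at *
      rcases mul_nonneg_iff.1 hab with h | h <;> lia
    have hz0 : u + (-σ) • v ≠ 0 := by
      intro hz
      have : u.2.1 = σ * v.2.1 := by
        have := congrArg (fun x : ℤ × ℤ × ℤ => x.2.1) hz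
        simp at this
        linarith
      rw [this, hσv2] at hu2
      exact lt_irrefl _ hu2
    have hzh : height (u + (-σ) • v) ≤ height v := by
      rw [hhv]
      refine max_le ?_ ?_
      · have := habs u.1 (σ * v.1) |v.2.1| hs1 hu1.le (hσv1 ▸ hle)
        simpa [sub_eq_add_neg] using this
      · have := habs u.2.1 (σ * v.2.1) |v.2.1| hs.le hu2.le hσv2.le
        simpa [sub_eq_add_neg] using this
    have hzL := h.le_of_le _ hz0 hzh
    have e : linForm s t (u + (-σ) • v) = linForm s t u - σ * linForm s t v := by
      have := linForm_smul_add_smul s t 1 (-σ) u v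
      rw [one_smul] at this
      rw [this]; push_cast; ring
    have hσLv : |σ * linForm s t v| = |linForm s t v| := by rw [abs_mul, hσR, one_mul]
    have hzL' : 2 * |linForm s t v| ≤ |linForm s t u| := by
      rw [e] at hzL
      rw [← hσLv] at hzL hL ⊢
      rcases abs_cases (linForm s t u) with h1 | h1 <;>
        rcases abs_cases (σ * linForm s t v) with h2 | h2 <;>
        rcases abs_cases (linForm s t u - σ * linForm s t v) with h3 | h3 <;> nlinarith
    have := abs_sub_abs_le_abs_sub (linForm s t u * v.2.1) (linForm s t v * u.2.1)
    rw [abs_mul, abs_mul] at this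
    have h5 : |linForm s t v| * |(u.2.1 : ℝ)| ≤ |linForm s t v| * |(v.2.1 : ℝ)| := by gcongr
    have h6 := mul_le_mul_of_nonneg_right hzL' (abs_nonneg (v.2.1 : ℝ))
    linarith

lemma abs_linForm_minor_le (s t : ℝ) (u v : ℤ × ℤ × ℤ) :
    |linForm s t u * v.2.1 - linForm s t v * u.2.1| ≤
      |linForm s t u| * height v + |linForm s t v| * height u := by
  have h1 : |(v.2.1 : ℝ)| ≤ height v := by exact_mod_cast le_max_right |v.1| |v.2.1|
  have h2 : |(u.2.1 : ℝ)| ≤ height u := by exact_mod_cast le_max_right |u.1| |u.2.1|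
  refine (abs_sub _ _).trans ?_
  rw [abs_mul, abs_mul]
  gcongr

lemma abs_minor_le (u v : ℤ × ℤ × ℤ) : |minor u v| ≤ 2 * (height u * height v) := by
  have h1 : |u.1| * |v.2.1| ≤ height u * height v :=
    mul_le_mul (le_max_left _ _) (le_max_right _ _) (abs_nonneg _) (height_nonneg _)
  have h2 : |u.2.1| * |v.1| ≤ height u * height v :=
    mul_le_mul (le_max_right _ _) (le_max_left _ _) (abs_nonneg _) (height_nonneg _)
  refine (abs_sub _ _).trans ?_
  rw [abs_mul, abs_mul]
  linarith

lemma abs_minor_swapFst (u v : ℤ × ℤ × ℤ) : |minor (swapFst u) (swapFst v)| = |minor u v| := by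
  rw [minor_swapFst, abs_neg]

lemma minor_comm (u v : ℤ × ℤ × ℤ) : minor v u = -minor u v := by
  simp only [minor]; ring

lemma exists_pos_combination (s t : ℝ) {u v : ℤ × ℤ × ℤ} (hu : u.1 * u.2.1 ≤ 0)
    (h0 : 0 < height u) {j : ℤ} (hj : 0 < j) (hjD : height u ^ 2 < j * |minor u v|) :
    ∃ y : ℤ × ℤ × ℤ, 0 < y.1 ∧ 0 < y.2.1 ∧ height y * height u ≤ j * |minor u v| ∧
      |linForm s t y| * height u ≤
        j * (|linForm s t v| * height u + |linForm s t u| * height v) +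
          |linForm s t u| * height u := by
  have hjR : (0 : ℝ) < j := by exact_mod_cast hj
  rcases le_total |u.1| |u.2.1| with hle | hle
  · obtain ⟨y, hy1, hy2, hy3, hy4⟩ :=
      exists_pos_combination_of_abs_le s t hu hle h0 hj hjD
    refine ⟨y, hy1, hy2, hy3, hy4.trans ?_⟩
    gcongr
    exact abs_linForm_minor_le _ _ _ _
  · obtain ⟨y, hy1, hy2, hy3, hy4⟩ := exists_pos_combination_of_abs_le t s
      (u := swapFst u) (v := swapFst v) (by simp only [swapFst]; linarith)
      hle (by rwa [height_swapFst]) hj (by rwa [height_swapFst, abs_minor_swapFst])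
    rw [height_swapFst, abs_minor_swapFst] at hy3
    refine ⟨swapFst y, hy2, hy1, by rwa [height_swapFst], ?_⟩
    have := abs_linForm_minor_le t s (swapFst v) (swapFst u)
    rw [height_swapFst] at hy4
    simp only [height_swapFst] at this
    rw [linForm_swapFst] at this hy4 ⊢
    rw [linForm_swapFst] at this hy4
    refine hy4.trans ?_
    gcongr

lemma Consecutive.height_pos {s t : ℝ} {u v : ℤ × ℤ × ℤ} (h : Consecutive s t u v) :
    0 < height v := (height_nonneg u).trans_lt h.height_lt

lemma Consecutive.exists_pos_height_le {s t : ℝ} {u v : ℤ × ℤ × ℤ} (h : Consecutive s t u v)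
    (hv : v.1 * v.2.1 ≤ 0) (hD : minor u v ≠ 0) :
    ∃ y : ℤ × ℤ × ℤ, 0 < y.1 ∧ 0 < y.2.1 ∧ height y ≤ 3 * height v ∧
      |linForm s t y| * (|minor u v| : ℤ) ≤ 9 * (height v : ℝ) ^ 2 * |linForm s t u| := by
  have hV := h.height_pos
  have hDpos : 0 < |minor u v| := abs_pos.2 hD
  have hUV := h.height_lt
  have hU := height_nonneg u
  have hL := h.lt
  have hD2 : |minor u v| ≤ 2 * height v ^ 2 := by
    have := abs_minor_le u v
    nlinarith
  set j := height v ^ 2 / |minor u v| + 1 with hjdef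
  have hj0 : 0 ≤ height v ^ 2 / |minor u v| := Int.ediv_nonneg (sq_nonneg _) hDpos.le
  have hj1 : height v ^ 2 < j * |minor u v| := Int.lt_ediv_add_one_mul_self _ hDpos
  have hj2 : j * |minor u v| ≤ 3 * height v ^ 2 := by
    have := Int.ediv_mul_le (height v ^ 2) hDpos.ne'
    rw [hjdef, add_mul]; linarith
  have hvu : |minor v u| = |minor u v| := by rw [minor_comm, abs_neg]
  obtain ⟨y, hy1, hy2, hy3, hy4⟩ := exists_pos_combination s t (u := v) (v := u) hv hV
    (j := j) (by lia) (by rwa [hvu])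
  rw [hvu] at hy3
  refine ⟨y, hy1, hy2, by nlinarith, ?_⟩
  have hVR : (0 : ℝ) < height v := by exact_mod_cast hV
  have hUVR : (height u : ℝ) ≤ height v := by exact_mod_cast hUV.le
  have hjR : (1 : ℝ) ≤ j := by exact_mod_cast (show 1 ≤ j by lia)
  have hj2R : (j : ℝ) * (|minor u v| : ℤ) ≤ 3 * (height v : ℝ) ^ 2 := by exact_mod_cast hj2
  have hDR : (0 : ℝ) < (|minor u v| : ℤ) := by exact_mod_cast hDpos
  have h1 : |linForm s t y| * height v ≤ (3 * j * |linForm s t u|) * height v := by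
    calc _ ≤ _ := hy4
      _ ≤ j * (|linForm s t u| * height v + |linForm s t u| * height v) +
          j * (|linForm s t u| * height v) := by
        have : |linForm s t v| * (height v : ℝ) ≤ j * (|linForm s t u| * height v) := by
          refine le_trans ?_ (le_mul_of_one_le_left (by positivity) hjR)
          gcongr
        gcongr
      _ = _ := by ring
  have h2 := le_of_mul_le_mul_right h1 hVR
  calc _ ≤ (3 * j * |linForm s t u|) * (|minor u v| : ℤ) := by gcongr
    _ = 3 * |linForm s t u| * (j * (|minor u v| : ℤ)) := by ring
    _ ≤ 3 * |linForm s t u| * (3 * (height v : ℝ) ^ 2) := by gcongr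
    _ = _ := by ring

lemma Consecutive.exists_pos_height_mul_le {s t : ℝ} {u v : ℤ × ℤ × ℤ}
    (h : Consecutive s t u v) (hu : u.1 * u.2.1 ≤ 0) (hU : 0 < height u)
    (hD : height u ^ 2 ≤ 16 * |minor u v|) :
    ∃ y : ℤ × ℤ × ℤ, 0 < y.1 ∧ 0 < y.2.1 ∧ height y * height u ≤ 17 * |minor u v| ∧
      |linForm s t y| * height u ≤ 35 * (|linForm s t u| * height v) := by
  obtain ⟨y, hy1, hy2, hy3, hy4⟩ := exists_pos_combination s t (u := u) (v := v) hu hU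
    (j := 17) (by norm_num) (by nlinarith)
  refine ⟨y, hy1, hy2, hy3, hy4.trans ?_⟩
  have hUR : (0 : ℝ) < height u := by exact_mod_cast hU
  have hUV : (height u : ℝ) ≤ height v := by exact_mod_cast h.height_lt.le
  have h1 : |linForm s t v| * (height u : ℝ) ≤ |linForm s t u| * height v :=
    mul_le_mul h.lt.le hUV hUR.le (abs_nonneg _)
  have h2 : |linForm s t u| * (height u : ℝ) ≤ |linForm s t u| * height v := by gcongr
  push_cast
  linarith

lemma tripleDet_mul (s t : ℝ) (u v w : ℤ × ℤ × ℤ) :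
    (tripleDet u v w : ℝ) * v.2.1 =
      minor v w * (linForm s t u * v.2.1 - linForm s t v * u.2.1) -
        minor u v * (linForm s t v * w.2.1 - linForm s t w * v.2.1) := by
  simp only [tripleDet, minor, linForm]
  push_cast
  ring

lemma tripleDet_swapFst (u v w : ℤ × ℤ × ℤ) :
    tripleDet (swapFst u) (swapFst v) (swapFst w) = -tripleDet u v w := by
  simp only [tripleDet, swapFst]; ring

lemma Consecutive.height_sq_le_of_abs_le {s t : ℝ} {u v w : ℤ × ℤ × ℤ}
    (h : Consecutive s t u v) (h' : Consecutive s t v w) (hle : |v.1| ≤ |v.2.1|)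
    (hdet : tripleDet u v w ≠ 0) (hD : 16 * |minor u v| ≤ height v ^ 2) :
    height v ^ 2 ≤ 16 * |minor v w| := by
  have hvR : |(v.2.1 : ℝ)| = height v := by
    rw [show height v = |v.2.1| from max_eq_right hle]; push_cast; rfl
  have hX : (0 : ℝ) < height v := by exact_mod_cast h.height_pos
  have hUX : (height u : ℝ) ≤ height v := by exact_mod_cast h.height_lt.le
  have hXW : (height v : ℝ) ≤ height w := by exact_mod_cast h'.height_lt.le
  have hW : (0 : ℝ) < height w := hX.trans_le hXW
  have hdet1 : (1 : ℝ) ≤ |(tripleDet u v w : ℝ)| := by exact_mod_cast Int.one_le_abs hdet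
  have hDR : 16 * |(minor u v : ℝ)| ≤ (height v : ℝ) ^ 2 := by exact_mod_cast hD
  suffices (height v : ℝ) ^ 2 ≤ 16 * |(minor v w : ℝ)| by exact_mod_cast this
  have hA : |linForm s t u * v.2.1 - linForm s t v * u.2.1| ≤
      2 * (|linForm s t u| * height v) := by
    have := mul_le_mul h.lt.le hUX (by exact_mod_cast height_nonneg u) (abs_nonneg _)
    linarith [abs_linForm_minor_le s t u v]
  have hB : |linForm s t v * w.2.1 - linForm s t w * v.2.1| ≤
      2 * (|linForm s t v| * height w) := by
    have := mul_le_mul h'.lt.le hXW hX.le (abs_nonneg _)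
    linarith [abs_linForm_minor_le s t v w]
  have hM := h.mul_height_sq_le
  have hM' := h'.mul_height_sq_le
  have h1 : (height v : ℝ) ≤ |(minor v w : ℝ)| * (2 * (|linForm s t u| * height v)) +
      |(minor u v : ℝ)| * (2 * (|linForm s t v| * height w)) := by
    calc (height v : ℝ) ≤ |(tripleDet u v w : ℝ)| * |(v.2.1 : ℝ)| := by
          rw [hvR]; exact le_mul_of_one_le_left hX.le hdet1
      _ ≤ |(minor v w : ℝ)| * |linForm s t u * v.2.1 - linForm s t v * u.2.1| +
          |(minor u v : ℝ)| * |linForm s t v * w.2.1 - linForm s t w * v.2.1| := by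
        rw [← abs_mul, tripleDet_mul s t, ← abs_mul, ← abs_mul]
        exact abs_sub _ _
      _ ≤ _ := by gcongr
  have h2 : |(minor u v : ℝ)| * (2 * (|linForm s t v| * height w)) ≤ height v / 2 := by
    have e1 : |linForm s t v| * height w * height v ≤ 4 := by
      refine le_trans ?_ hM'
      rw [pow_two, ← mul_assoc]
      gcongr
    have := mul_le_mul hDR e1 (by positivity) (by positivity)
    have e2 : 2 * (|(minor u v : ℝ)| * (2 * (|linForm s t v| * height w))) * height v ≤
        height v * height v := by nlinarith
    linarith [le_of_mul_le_mul_right e2 hX]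
  have h3 : (1 : ℝ) ≤ 4 * (|(minor v w : ℝ)| * |linForm s t u|) := by
    have : (1 : ℝ) * height v ≤ 4 * (|(minor v w : ℝ)| * |linForm s t u|) * height v := by
      linarith
    exact le_of_mul_le_mul_right this hX
  have hL := h.pos.trans h.lt
  have h4 : (height v : ℝ) ^ 2 * |linForm s t u| ≤ 16 * |(minor v w : ℝ)| * |linForm s t u| := by
    linarith
  exact le_of_mul_le_mul_right h4 hL

lemma Consecutive.height_sq_le {s t : ℝ} {u v w : ℤ × ℤ × ℤ}
    (h : Consecutive s t u v) (h' : Consecutive s t v w)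
    (hdet : tripleDet u v w ≠ 0) (hD : 16 * |minor u v| ≤ height v ^ 2) :
    height v ^ 2 ≤ 16 * |minor v w| := by
  rcases le_total |v.1| |v.2.1| with hle | hle
  · exact h.height_sq_le_of_abs_le h' hle hdet hD
  · have := h.swapFst.height_sq_le_of_abs_le h'.swapFst hle
      (by rwa [tripleDet_swapFst, neg_ne_zero]) (by rwa [abs_minor_swapFst, height_swapFst])
    rwa [abs_minor_swapFst, height_swapFst] at this

lemma Consecutive.exists_pos_of_abs_le {s t : ℝ} {u v : ℤ × ℤ × ℤ}
    (h : Consecutive s t u v) (hu : u.1 * u.2.1 ≤ 0) (hv : v.1 * v.2.1 ≤ 0)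
    (hle : |v.1| ≤ |v.2.1|) (hD : 16 * |minor u v| ≤ height v ^ 2) :
    ∃ y : ℤ × ℤ × ℤ, 0 < y.1 ∧ 0 < y.2.1 ∧
      (height y : ℝ) * (|linForm s t u| * height v) ≤ 51 ∧
      |linForm s t y| ≤ 35 * |linForm s t u| := by
  have hvR : |(v.2.1 : ℝ)| = height v := by
    rw [show height v = |v.2.1| from max_eq_right hle]; push_cast; rfl
  have hX : (0 : ℝ) < height v := by exact_mod_cast h.height_pos
  have hUX : (height u : ℝ) ≤ height v := by exact_mod_cast h.height_lt.le
  have hDR : 16 * |(minor u v : ℝ)| ≤ (height v : ℝ) ^ 2 := by exact_mod_cast hD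
  have hL := h.pos.trans h.lt
  have hM := h.mul_height_sq_le
  obtain ⟨w, hw⟩ := h.exists_tripleDet_eq_one
  set A := linForm s t u * v.2.1 - linForm s t v * u.2.1 with hAdef
  have hA1 : |linForm s t u| * height v ≤ 2 * |A| := h.le_two_mul_abs_minor hu hv hle
  have hA2 : |A| ≤ 2 * (|linForm s t u| * height v) := by
    have := mul_le_mul h.lt.le hUX (by exact_mod_cast height_nonneg u) (abs_nonneg _)
    linarith [abs_linForm_minor_le s t u v]
  have hA0 : A ≠ 0 := by
    intro hA
    rw [hA, abs_zero, mul_zero] at hA1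
    exact hA1.not_gt (mul_pos hL hX)
  set a := round ((linForm s t v * w.2.1 - linForm s t w * v.2.1) / A) with ha
  set w' := w + a • u with hw'def
  have hw'L : linForm s t w' = linForm s t w + a * linForm s t u := by
    have := linForm_smul_add_smul s t 1 a w u
    rw [one_smul] at this
    rw [hw'def, this]; push_cast; ring
  have hw'2 : (w'.2.1 : ℝ) = w.2.1 + a * u.2.1 := by
    simp [hw'def]
  have hdet : tripleDet u v w' = 1 := by
    rw [← hw]
    simp only [hw'def, tripleDet, Prod.fst_add, Prod.snd_add, Prod.smul_fst, Prod.smul_snd,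
      smul_eq_mul]
    ring
  have hB : |linForm s t v * w'.2.1 - linForm s t w' * v.2.1| ≤ |A| := by
    have e : linForm s t v * w'.2.1 - linForm s t w' * v.2.1 =
        ((linForm s t v * w.2.1 - linForm s t w * v.2.1) / A - a) * A := by
      rw [sub_mul, div_mul_cancel₀ _ hA0, hw'L, hw'2, hAdef]; ring
    rw [e, abs_mul]
    have := abs_sub_round ((linForm s t v * w.2.1 - linForm s t w * v.2.1) / A)
    exact mul_le_of_le_one_left (abs_nonneg _) (by linarith)
  set B := linForm s t v * w'.2.1 - linForm s t w' * v.2.1 with hBdef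
  have hid : (v.2.1 : ℝ) = minor v w' * A - minor u v * B := by
    have := tripleDet_mul s t u v w'
    rwa [hdet, Int.cast_one, one_mul] at this
  have hDA : |(minor u v : ℝ) * B| ≤ height v / 2 := by
    rw [abs_mul]
    have e1 : |B| * height v ≤ 8 := by nlinarith
    have e2 := mul_le_mul hDR e1 (by positivity) (by positivity)
    have e3 : 2 * (|(minor u v : ℝ)| * |B|) * height v ≤ height v * height v := by nlinarith
    linarith [le_of_mul_le_mul_right e3 hX]
  have hn1 : (height v : ℝ) / 2 ≤ |(minor v w' : ℝ)| * |A| := by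
    have := abs_sub (minor v w' * A) (minor u v * B)
    rw [← hid, hvR, abs_mul] at this
    linarith
  have hn2 : |(minor v w' : ℝ)| * |A| ≤ 3 / 2 * height v := by
    have := abs_add_le (v.2.1 : ℝ) (minor u v * B)
    rw [hvR] at this
    rw [← abs_mul, show minor v w' * A = v.2.1 + minor u v * B by linarith]
    linarith
  have hn3 : 1 ≤ 4 * (|(minor v w' : ℝ)| * |linForm s t u|) := by
    have := mul_le_mul_of_nonneg_left hA2 (abs_nonneg (minor v w' : ℝ))
    have e : 1 * (height v : ℝ) ≤ 4 * (|(minor v w' : ℝ)| * |linForm s t u|) * height v := by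
      linarith
    exact le_of_mul_le_mul_right e hX
  have hn4 : |(minor v w' : ℝ)| * |linForm s t u| ≤ 3 := by
    have := mul_le_mul_of_nonneg_left hA1 (abs_nonneg (minor v w' : ℝ))
    have e : (|(minor v w' : ℝ)| * |linForm s t u|) * height v ≤ 3 * height v := by
      linarith
    exact le_of_mul_le_mul_right e hX
  have hn5 : (height v : ℝ) ^ 2 ≤ 16 * |(minor v w' : ℝ)| := by
    have e : (height v : ℝ) ^ 2 * |linForm s t u| ≤
        16 * |(minor v w' : ℝ)| * |linForm s t u| := by linarith
    exact le_of_mul_le_mul_right e hL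
  have hn6 : height v ^ 2 < 17 * |minor v w'| := by
    have e : (height v : ℝ) ^ 2 < 17 * |(minor v w' : ℝ)| := by nlinarith
    exact_mod_cast e
  obtain ⟨y, hy1, hy2, hy3, hy4⟩ := exists_pos_combination_of_abs_le s t hv hle h.height_pos
    (j := 17) (by norm_num) hn6
  refine ⟨y, hy1, hy2, ?_, ?_⟩
  · have hy3R : (height y : ℝ) * height v ≤ 17 * |(minor v w' : ℝ)| := by exact_mod_cast hy3
    have := mul_le_mul_of_nonneg_right hy3R hL.le
    linarith
  · have e1 : |linForm s t w' * v.2.1 - linForm s t v * w'.2.1| = |B| := by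
      rw [hBdef, abs_sub_comm]
    rw [e1] at hy4
    push_cast at hy4
    have e2 := mul_le_mul_of_nonneg_right h.lt.le hX.le
    have e3 : |linForm s t y| * height v ≤ 35 * |linForm s t u| * height v := by linarith
    exact le_of_mul_le_mul_right e3 hX

lemma Consecutive.exists_pos {s t : ℝ} {u v : ℤ × ℤ × ℤ}
    (h : Consecutive s t u v) (hu : u.1 * u.2.1 ≤ 0) (hv : v.1 * v.2.1 ≤ 0)
    (hD : 16 * |minor u v| ≤ height v ^ 2) :
    ∃ y : ℤ × ℤ × ℤ, 0 < y.1 ∧ 0 < y.2.1 ∧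
      (height y : ℝ) * (|linForm s t u| * height v) ≤ 51 ∧
      |linForm s t y| ≤ 35 * |linForm s t u| := by
  rcases le_total |v.1| |v.2.1| with hle | hle
  · exact h.exists_pos_of_abs_le hu hv hle hD
  · obtain ⟨y, hy1, hy2, hy3, hy4⟩ := h.swapFst.exists_pos_of_abs_le
      (by simpa only [_root_.swapFst, mul_comm] using hu)
      (by simpa only [_root_.swapFst, mul_comm] using hv) hle
      (by rwa [abs_minor_swapFst, height_swapFst])
    rw [linForm_swapFst, height_swapFst] at hy3
    rw [linForm_swapFst s t u] at hy4
    exact ⟨_root_.swapFst y, hy2, hy1, by rwa [height_swapFst], by rwa [linForm_swapFst]⟩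

/-- The cross product of two integer triples. -/
def crossProd (u v : ℤ × ℤ × ℤ) : ℤ × ℤ × ℤ :=
  (u.2.1 * v.2.2 - u.2.2 * v.2.1, u.2.2 * v.1 - u.1 * v.2.2, minor u v)

lemma Consecutive.crossProd_eq_smul {s t : ℝ} {u v w : ℤ × ℤ × ℤ} (h : Consecutive s t u v)
    (h' : Consecutive s t v w) (hdet : tripleDet u v w = 0) :
    ∃ c : ℤ, |c| = 1 ∧ crossProd v w = c • crossProd u v := by
  obtain ⟨a, ha⟩ := h.exists_tripleDet_eq_one
  obtain ⟨b, hb⟩ := h'.exists_tripleDet_eq_one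
  have h1 : crossProd v w = tripleDet v w a • crossProd u v := by
    simp only [crossProd, tripleDet, minor, Prod.ext_iff, Prod.smul_fst, Prod.smul_snd,
      smul_eq_mul] at *
    refine ⟨?_, ?_, ?_⟩
    · linear_combination (-(v.2.1 * w.2.2 - v.2.2 * w.2.1)) * ha +
        (v.2.1 * a.2.2 - v.2.2 * a.2.1) * hdet
    · linear_combination (-(v.2.2 * w.1 - v.1 * w.2.2)) * ha +
        (v.2.2 * a.1 - v.1 * a.2.2) * hdet
    · linear_combination (-(v.1 * w.2.1 - v.2.1 * w.1)) * ha +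
        (v.1 * a.2.1 - v.2.1 * a.1) * hdet
  refine ⟨tripleDet v w a, Int.isUnit_iff_abs_eq.1
    (IsUnit.of_mul_eq_one (tripleDet u v b) ?_), h1⟩
  have e : ∀ x y z : ℤ × ℤ × ℤ, tripleDet x y z = (crossProd x y).1 * z.1 +
      (crossProd x y).2.1 * z.2.1 + (crossProd x y).2.2 * z.2.2 := fun _ _ _ => rfl
  rw [← hb, e v w b, h1, e u v b]
  simp only [Prod.smul_fst, Prod.smul_snd, smul_eq_mul]
  ring

lemma Consecutive.abs_linForm_minor_mul_le {s t : ℝ} {u v : ℤ × ℤ × ℤ}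
    (h : Consecutive s t u v) :
    |s * (crossProd u v).2.2 - (crossProd u v).1| * height v ≤ 8 := by
  have hX : (0 : ℝ) < height v := by exact_mod_cast h.height_pos
  have hUX : (height u : ℝ) ≤ height v := by exact_mod_cast h.height_lt.le
  have h1 := abs_linForm_minor_le s t u v
  have e : linForm s t u * v.2.1 - linForm s t v * u.2.1 =
      s * (crossProd u v).2.2 - (crossProd u v).1 := by
    simp only [linForm, crossProd, minor]; push_cast; ring
  rw [e] at h1
  have h2 := mul_le_mul h.lt.le hUX (by exact_mod_cast height_nonneg u) (abs_nonneg _)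
  have h3 := h.mul_height_sq_le
  nlinarith

lemma exists_tripleDet_ne_zero {s t : ℝ} (hst : ∀ z, z ≠ 0 → linForm s t z ≠ 0)
    {x : ℕ → ℤ × ℤ × ℤ} (hx : ∀ k, Consecutive s t (x k) (x (k + 1)))
    (hxk : ∀ k : ℕ, (k : ℤ) ≤ height (x k)) (K : ℕ) :
    ∃ k, K ≤ k ∧ tripleDet (x k) (x (k + 1)) (x (k + 2)) ≠ 0 := by
  by_contra! hdet
  have hconst : ∀ k, K ≤ k → ∃ c : ℤ, |c| = 1 ∧
      crossProd (x k) (x (k + 1)) = c • crossProd (x K) (x (K + 1)) := by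
    intro k hk
    induction k, hk using Nat.le_induction with
    | base => exact ⟨1, rfl, by simp⟩
    | succ k hk ih =>
      obtain ⟨c, hc, hck⟩ := ih
      obtain ⟨d, hd, hdk⟩ := (hx k).crossProd_eq_smul (hx (k + 1)) (hdet k hk)
      exact ⟨d * c, by rw [abs_mul, hc, hd]; rfl, by rw [hdk, hck, smul_smul]⟩
  have hzero : ∀ f : ℤ × ℤ × ℤ → ℝ, (∀ (c : ℤ) z, f (c • z) = c * f z) →
      (∀ k, |f (crossProd (x k) (x (k + 1)))| * height (x (k + 1)) ≤ 8) →
      f (crossProd (x K) (x (K + 1))) = 0 := by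
    intro f hf hb
    by_contra hne
    have hpos := abs_pos.2 hne
    obtain ⟨n, hn⟩ := exists_nat_gt (8 / |f (crossProd (x K) (x (K + 1)))|)
    rw [div_lt_iff₀ hpos] at hn
    obtain ⟨c, hc, hck⟩ := hconst (K + n) (by lia)
    have h1 := hb (K + n)
    have hcR : |(c : ℝ)| = 1 := by exact_mod_cast hc
    rw [hck, hf, abs_mul, hcR, one_mul] at h1
    have h2 : (n : ℝ) ≤ height (x (K + n + 1)) := by
      have := hxk (K + n + 1)
      exact_mod_cast (show (n : ℤ) ≤ height (x (K + n + 1)) by lia)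
    nlinarith
  have h1 := hzero (fun z => s * z.2.2 - z.1) (fun c z => by simp; ring)
    fun k => (hx k).abs_linForm_minor_mul_le
  have h2 := hzero (fun z => t * z.2.2 - z.2.1) (fun c z => by simp; ring) fun k => by
    have := (hx k).swapFst.abs_linForm_minor_mul_le
    rw [height_swapFst] at this
    refine le_of_eq_of_le ?_ this
    rw [← abs_neg]
    congr 2
    simp only [crossProd, minor, swapFst]; push_cast; ring
  obtain ⟨w, hw⟩ := (hx K).exists_tripleDet_eq_one
  have e1 := hst ((crossProd (x K) (x (K + 1))).2.2, 0, -(crossProd (x K) (x (K + 1))).1)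
  have e2 := hst (0, (crossProd (x K) (x (K + 1))).2.2, -(crossProd (x K) (x (K + 1))).2.1)
  have e1' := not_imp_comm.1 e1 (by simp only [linForm]; push_cast; rw [not_not]; linarith)
  have e2' := not_imp_comm.1 e2 (by simp only [linForm]; push_cast; rw [not_not]; linarith)
  simp only [Prod.ext_iff, Prod.fst_zero, Prod.snd_zero, neg_eq_zero] at e1' e2'
  have : tripleDet (x K) (x (K + 1)) w = 0 := by
    change (crossProd (x K) (x (K + 1))).1 * w.1 + (crossProd (x K) (x (K + 1))).2.1 * w.2.1 +
      (crossProd (x K) (x (K + 1))).2.2 * w.2.2 = 0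
    rw [e1'.1, e1'.2.2, e2'.2.2]; ring
  lia

lemma mul_rpow_le_of_le_mul_div_rpow {p ε L X : ℝ} (hp : p * p = p + 1) (hp0 : 0 < p)
    (hε : 0 < ε) (hL : 0 < L) (hX : 0 < X) (h : ε ≤ 35 * L * (51 / (L * X)) ^ p) :
    L * X ^ (p + 1) ≤ (35 * 51 ^ p / ε) ^ p := by
  have h1 : L ^ (p - 1) * X ^ p ≤ 35 * 51 ^ p / ε := by
    rw [Real.div_rpow (by norm_num) (by positivity), Real.mul_rpow hL.le hX.le] at h
    rw [Real.rpow_sub_one hL.ne', le_div_iff₀ hε]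
    have hLp : 0 < L ^ p := by positivity
    have hXp : 0 < X ^ p := by positivity
    calc L ^ p / L * X ^ p * ε ≤ L ^ p / L * X ^ p * (35 * L * (51 ^ p / (L ^ p * X ^ p))) := by
          gcongr
      _ = _ := by field_simp
  calc L * X ^ (p + 1) = (L ^ (p - 1) * X ^ p) ^ p := by
        rw [Real.mul_rpow (by positivity) (by positivity), ← Real.rpow_mul hL.le,
          ← Real.rpow_mul hX.le, hp, sub_mul, hp, one_mul, add_sub_cancel_left, Real.rpow_one]
    _ ≤ _ := Real.rpow_le_rpow (by positivity) h1 hp0.le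

theorem exists_pos_linForm_mul_rpow_lt {s t p : ℝ} (hst : ∀ z, z ≠ 0 → linForm s t z ≠ 0)
    (hp : p * p = p + 1) (hp0 : 0 < p) {ε : ℝ} (hε : 0 < ε) :
    ∃ y : ℤ × ℤ × ℤ, 0 < y.1 ∧ 0 < y.2.1 ∧ |linForm s t y| * (height y : ℝ) ^ p < ε := by
  by_contra! H
  have hp2 : p < 2 := by nlinarith
  have H' : ∀ (y : ℤ × ℤ × ℤ) (S : ℝ), 0 < y.1 → 0 < y.2.1 → (height y : ℝ) ≤ S →
      ε ≤ |linForm s t y| * S ^ p := by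
    intro y S h1 h2 hS
    refine (H y h1 h2).trans ?_
    have : (0 : ℝ) ≤ height y := by exact_mod_cast height_nonneg y
    gcongr
  obtain ⟨x, hx⟩ := exists_seq_consecutive hst
  have hxk : ∀ k : ℕ, (k : ℤ) ≤ height (x k) := by
    intro k
    induction k with
    | zero => exact height_nonneg _
    | succ k ih => have := (hx k).height_lt; push_cast; lia
  obtain ⟨T, hT⟩ := Filter.eventually_atTop.1
    ((tendsto_rpow_atTop (show 0 < 2 - p by linarith)).eventually_ge_atTop (576 * 3 ^ p / ε))
  have hbig : ∀ X : ℝ, 0 < X → T ≤ X → 576 * 3 ^ p * X ^ p ≤ ε * X ^ 2 := by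
    intro X hX hTX
    have h1 := hT X hTX
    rw [div_le_iff₀ hε] at h1
    calc 576 * 3 ^ p * X ^ p ≤ X ^ (2 - p) * ε * X ^ p := by gcongr
      _ = ε * (X ^ (2 - p) * X ^ p) := by ring
      _ = ε * X ^ 2 := by
        rw [← Real.rpow_add hX, sub_add_cancel, ← Real.rpow_natCast]; norm_num
  have h3p : (1 : ℝ) ≤ 3 ^ p := Real.one_le_rpow (by norm_num) hp0.le
  obtain ⟨K, hK⟩ := exists_nat_ge (max T 1)
  have hXpos : ∀ k, K ≤ k → (T ≤ height (x k) ∧ (1 : ℝ) ≤ height (x k)) := by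
    intro k hk
    have h1 : ((k : ℤ) : ℝ) ≤ height (x k) := by exact_mod_cast hxk k
    have h2 : (K : ℝ) ≤ k := by exact_mod_cast hk
    push_cast at h1
    exact max_le_iff.1 (hK.trans (h2.trans h1))
  have hquad : ∀ k, K ≤ k → (x k).1 * (x k).2.1 ≤ 0 := by
    intro k hk
    by_contra! hpos
    obtain ⟨hTX, hX1⟩ := hXpos k hk
    have hX0 : (0 : ℝ) < height (x k) := by linarith
    have hε1 : ε ≤ |linForm s t (x k)| * (height (x k) : ℝ) ^ p := by
      rcases mul_pos_iff.1 hpos with h | h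
      · exact H _ h.1 h.2
      · have := H (-x k) (by simpa using h.1) (by simpa using h.2)
        have e1 : height (-x k) = height (x k) := by simp [height]
        have e2 : linForm s t (-x k) = -linForm s t (x k) := by simp [linForm]; ring
        rwa [e1, e2, abs_neg] at this
    have h1 := (hx k).mul_height_sq_le
    have h2 : (height (x k) : ℝ) ≤ height (x (k + 1)) := by exact_mod_cast (hx k).height_lt.le
    have h3 : |linForm s t (x k)| * (height (x k) : ℝ) ^ 2 ≤ 4 := by
      refine le_trans ?_ h1
      gcongr
    have h4 := hbig _ hX0 hTX
    have h5 : 0 < (height (x k) : ℝ) ^ p := by positivity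
    have h6 := mul_le_mul_of_nonneg_right hε1 (sq_nonneg (height (x k) : ℝ))
    have h7 := mul_le_mul_of_nonneg_right h3 h5.le
    nlinarith
  have hminor : ∀ k, K ≤ k → ε * |(minor (x k) (x (k + 1)) : ℝ)| ≤
      9 * 3 ^ p * (|linForm s t (x k)| * (height (x (k + 1)) : ℝ) ^ 2) *
        (height (x (k + 1)) : ℝ) ^ p := by
    intro k hk
    have hX0 : (0 : ℝ) < height (x (k + 1)) := by exact_mod_cast (hx k).height_pos
    by_cases hD : minor (x k) (x (k + 1)) = 0
    · rw [hD, Int.cast_zero, abs_zero, mul_zero]; positivity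
    · obtain ⟨y, hy1, hy2, hy3, hy4⟩ := (hx k).exists_pos_height_le (hquad _ (by lia)) hD
      have h1 := H' y (3 * height (x (k + 1))) hy1 hy2 (by exact_mod_cast hy3)
      push_cast at hy4
      calc ε * |(minor (x k) (x (k + 1)) : ℝ)| ≤ |linForm s t y| *
            (3 * height (x (k + 1)) : ℝ) ^ p * |(minor (x k) (x (k + 1)) : ℝ)| := by gcongr
        _ = (|linForm s t y| * |(minor (x k) (x (k + 1)) : ℝ)|) *
            (3 * height (x (k + 1)) : ℝ) ^ p := by ring
        _ ≤ (9 * (height (x (k + 1)) : ℝ) ^ 2 * |linForm s t (x k)|) *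
            (3 * height (x (k + 1)) : ℝ) ^ p := by gcongr
        _ = _ := by rw [Real.mul_rpow (by norm_num) hX0.le]; ring
  have hminor_sq : ∀ k, K ≤ k →
      16 * |minor (x k) (x (k + 1))| ≤ height (x (k + 1)) ^ 2 := by
    intro k hk
    obtain ⟨hTX, hX1⟩ := hXpos (k + 1) (by lia)
    have hX0 : (0 : ℝ) < height (x (k + 1)) := by linarith
    have h1 := hminor k hk
    have h2 := (hx k).mul_height_sq_le
    have h3 := hbig _ hX0 hTX
    have h4 : 9 * 3 ^ p * (|linForm s t (x k)| * (height (x (k + 1)) : ℝ) ^ 2) *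
        (height (x (k + 1)) : ℝ) ^ p ≤ 9 * 3 ^ p * 4 * (height (x (k + 1)) : ℝ) ^ p := by gcongr
    have h5 : 16 * |(minor (x k) (x (k + 1)) : ℝ)| ≤ (height (x (k + 1)) : ℝ) ^ 2 := by
      have e : ε * (16 * |(minor (x k) (x (k + 1)) : ℝ)|) ≤
          ε * (height (x (k + 1)) : ℝ) ^ 2 := by linarith
      exact le_of_mul_le_mul_left e hε
    exact_mod_cast h5
  set C := (35 * 51 ^ p / ε) ^ p with hC
  have hform : ∀ k, K ≤ k →
      |linForm s t (x k)| * (height (x (k + 1)) : ℝ) ^ (p + 1) ≤ C := by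
    intro k hk
    have hX0 : (0 : ℝ) < height (x (k + 1)) := by exact_mod_cast (hx k).height_pos
    have hL := (hx k).pos.trans (hx k).lt
    obtain ⟨y, hy1, hy2, hy3, hy4⟩ := (hx k).exists_pos (hquad k hk) (hquad (k + 1) (by lia))
      (hminor_sq k hk)
    refine mul_rpow_le_of_le_mul_div_rpow hp hp0 hε hL hX0 ?_
    refine (H' y _ hy1 hy2 ((le_div_iff₀ (mul_pos hL hX0)).2 hy3)).trans ?_
    gcongr
  set C₂ := 9 * 3 ^ p * C / ε with hC₂
  have hminor_le : ∀ k, K ≤ k →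
      |(minor (x k) (x (k + 1)) : ℝ)| ≤ C₂ * height (x (k + 1)) := by
    intro k hk
    have hX0 : (0 : ℝ) < height (x (k + 1)) := by exact_mod_cast (hx k).height_pos
    have h1 := hminor k hk
    have h2 := hform k hk
    rw [Real.rpow_add_one hX0.ne'] at h2
    rw [hC₂, div_mul_eq_mul_div, le_div_iff₀ hε]
    calc |(minor (x k) (x (k + 1)) : ℝ)| * ε ≤ 9 * 3 ^ p *
          (|linForm s t (x k)| * (height (x (k + 1)) : ℝ) ^ 2) *
            (height (x (k + 1)) : ℝ) ^ p := by linarith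
      _ = 9 * 3 ^ p * (|linForm s t (x k)| *
          ((height (x (k + 1)) : ℝ) ^ p * height (x (k + 1)))) * height (x (k + 1)) := by ring
      _ ≤ _ := by gcongr
  have hC0 : 0 ≤ C := by positivity
  have hC₂0 : 0 ≤ C₂ := by positivity
  obtain ⟨M, hM⟩ := exists_nat_gt (35 * (17 * C₂) ^ p * C / ε)
  rw [div_lt_iff₀ hε] at hM
  obtain ⟨k, hk, hdet⟩ := exists_tripleDet_ne_zero hst hx hxk (max K M)
  have hkK : K ≤ k := (le_max_left _ _).trans hk
  have hkM : M ≤ k := (le_max_right _ _).trans hk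
  obtain ⟨y, hy1, hy2, hy3, hy4⟩ := (hx (k + 1)).exists_pos_height_mul_le (hquad _ (by lia))
    (hx k).height_pos ((hx k).height_sq_le (hx (k + 1)) hdet (hminor_sq k hkK))
  have hU1 := (hXpos (k + 1) (by lia)).2
  have hV1 := (hXpos (k + 2) (by lia)).2
  have hUM : (M : ℝ) ≤ height (x (k + 1)) := by
    have := hxk (k + 1)
    exact_mod_cast (show (M : ℤ) ≤ height (x (k + 1)) by lia)
  have hf := hform (k + 1) (by lia)
  have hm := hminor_le (k + 1) (by lia)
  rw [show k + 1 + 1 = k + 2 from rfl] at *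
  have hy3R : (height y : ℝ) * height (x (k + 1)) ≤ 17 * |(minor (x (k + 1)) (x (k + 2)) : ℝ)| := by
    exact_mod_cast hy3
  set U : ℝ := (height (x (k + 1)) : ℝ)
  set V : ℝ := (height (x (k + 2)) : ℝ)
  have hU0 : 0 < U := by linarith
  have hV0 : 0 < V := by linarith
  have hyS : (height y : ℝ) ≤ 17 * C₂ * V := by
    have : (0 : ℝ) ≤ height y := by exact_mod_cast height_nonneg y
    nlinarith
  have h1 := H' y _ hy1 hy2 hyS
  rw [Real.mul_rpow (by positivity) hV0.le] at h1
  rw [Real.rpow_add_one hV0.ne'] at hf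
  have h2 : U * ε ≤ 35 * (17 * C₂) ^ p * C := by
    calc U * ε ≤ U * (|linForm s t y| * ((17 * C₂) ^ p * V ^ p)) := by gcongr
      _ = (|linForm s t y| * U) * ((17 * C₂) ^ p * V ^ p) := by ring
      _ ≤ (35 * (|linForm s t (x (k + 1))| * V)) * ((17 * C₂) ^ p * V ^ p) := by gcongr
      _ = 35 * (17 * C₂) ^ p * (|linForm s t (x (k + 1))| * (V ^ p * V)) := by ring
      _ ≤ _ := by gcongr
  nlinarith

/-- W.M. Schmidt's theorem on approximation with positive integer variables. -/
theorem stmt15 (θ₁ θ₂ : ℝ)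
    (hindep : ∀ a b c : ℤ, (a : ℝ) * θ₁ + (b : ℝ) * θ₂ + (c : ℝ) = 0 →
      a = 0 ∧ b = 0 ∧ c = 0) :
    ∃ x₁ x₂ : ℕ → ℤ, (∀ i, 0 < x₁ i ∧ 0 < x₂ i) ∧
      Tendsto (fun i => nint (θ₁ * x₁ i + θ₂ * x₂ i) *
        ((max (x₁ i) (x₂ i) : ℤ) : ℝ) ^ ((1 + Real.sqrt 5) / 2)) atTop (nhds 0) := by
  have hst : ∀ z, z ≠ 0 → linForm θ₁ θ₂ z ≠ 0 := by
    rintro ⟨a, b, c⟩ hz h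
    obtain ⟨rfl, rfl, rfl⟩ := hindep a b c (by rw [← h]; simp only [linForm]; ring)
    exact hz rfl
  have h5 : Real.sqrt 5 * Real.sqrt 5 = 5 := Real.mul_self_sqrt (by norm_num)
  choose y hy1 hy2 hy3 using fun n : ℕ =>
    exists_pos_linForm_mul_rpow_lt hst (p := (1 + Real.sqrt 5) / 2) (by linarith)
      (by positivity) (Nat.one_div_pos_of_nat (α := ℝ) (n := n))
  refine ⟨fun n => (y n).1, fun n => (y n).2.1, fun n => ⟨hy1 n, hy2 n⟩, ?_⟩
  have hmax : ∀ n, max (y n).1 (y n).2.1 = height (y n) := fun n => by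
    rw [height, abs_of_pos (hy1 n), abs_of_pos (hy2 n)]
  have h0 : ∀ n, (0 : ℝ) ≤ height (y n) := fun n => by exact_mod_cast height_nonneg _
  refine squeeze_zero (fun n => ?_) (fun n => ?_) tendsto_one_div_add_atTop_nhds_zero_nat
  · rw [hmax]
    exact mul_nonneg (abs_nonneg _) (Real.rpow_nonneg (h0 n) _)
  · rw [hmax]
    refine le_trans ?_ (hy3 n).le
    refine mul_le_mul_of_nonneg_right ?_ (Real.rpow_nonneg (h0 n) _)
    have := round_le (θ₁ * (y n).1 + θ₂ * (y n).2.1) (-(y n).2.2)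
    simpa [nint, linForm] using this
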